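/- Let A be an associative unital algebra over a field k of prime characteristic p, and let u ∈ A with (u − 1)^p = 0. Then E(L(u)) = u, where E is the truncated exponential and L the truncated logarithm. -/

import Mathlib

/-!
The identity is universal: `u` is the image of `1 + X` under the evaluation `k[X] → A` at `u - 1`,
so it is enough to prove `E(L(1 + X)) ≡ 1 + X` modulo `X ^ p` in `k[X]`.

This is the usual differential equation argument, which survives truncation. With `ℓ = L(1 + X)`,
the chain rules for `exp` and `log` hold up to the top-degree terms `ℓ ^ (p-1)` and `X ^ (p-1)`,
so the difference `G = E(ℓ) - (1 + X)` satisfies `(1 + X) G' ≡ G` modulo `X ^ (p-1)`. Moreover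
`X ∣ G`. If `X ^ n ∣ G` with `n < p`, then `X ^ n ∣ G'` because `1 + X` is prime to `X`, and since
`1, …, n` are invertible in `k`, integrating term by term gives `X ^ (n+1) ∣ G`.
-/

/-- The truncated exponential `E(x) = ∑_{i=0}^{p-1} (1/i!) x^i`. -/
noncomputable def truncExp (k : Type*) [Field k] {A : Type*} [Ring A] [Algebra k A]
    (p : ℕ) (x : A) : A :=
  ∑ i ∈ Finset.range p, ((Nat.factorial i : k))⁻¹ • x ^ i


/-- The truncated logarithm `L(u) = ∑_{i=1}^{p-1} ((-1)^{i+1}/i) (u-1)^i`. -/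
noncomputable def truncLog (k : Type*) [Field k] {A : Type*} [Ring A] [Algebra k A]
    (p : ℕ) (u : A) : A :=
  ∑ i ∈ Finset.Icc 1 (p - 1), (((-1 : k) ^ (i + 1)) / (i : k)) • (u - 1) ^ i

open scoped Nat

lemma natCast_succ_ne_zero_of_factorial_ne_zero {R : Type*} [Semiring R] {m i : ℕ}
    (hm : (m ! : R) ≠ 0) (hi : i < m) : ((i + 1 : ℕ) : R) ≠ 0 := by
  obtain ⟨c, hc⟩ := Nat.dvd_factorial i.succ_pos hi
  rw [hc, Nat.cast_mul] at hm
  exact left_ne_zero_of_mul hm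

section Ring

variable {k A B : Type*} [Field k] [Ring A] [Algebra k A] [Ring B] [Algebra k B]

lemma map_truncExp (f : A →ₐ[k] B) (n : ℕ) (x : A) :
    f (truncExp k n x) = truncExp k n (f x) := by
  simp [truncExp]

lemma map_truncLog (f : A →ₐ[k] B) (n : ℕ) (u : A) :
    f (truncLog k n u) = truncLog k n (f u) := by
  simp [truncLog]

lemma truncExp_succ (n : ℕ) (x : A) :
    truncExp k (n + 1) x = truncExp k n x + (n ! : k)⁻¹ • x ^ n :=
  Finset.sum_range_succ _ _

lemma truncLog_succ_eq_sum_range (m : ℕ) (u : A) :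
    truncLog k (m + 1) u =
      ∑ i ∈ Finset.range m, ((-1 : k) ^ i / (i + 1 : ℕ)) • (u - 1) ^ (i + 1) := by
  rw [truncLog, Nat.add_sub_cancel, ← Finset.Ico_add_one_right_eq_Icc, Finset.sum_Ico_eq_sum_range,
    Nat.add_sub_cancel]
  simp only [add_comm 1, pow_succ (-1 : k), mul_neg_one, neg_neg]

lemma sub_one_dvd_truncLog (n : ℕ) (u : A) : u - 1 ∣ truncLog k n u :=
  Finset.dvd_sum fun _ hi =>
    dvd_smul_of_dvd _ (dvd_pow_self _ (Nat.one_le_iff_ne_zero.1 (Finset.mem_Icc.1 hi).1))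

lemma dvd_truncExp_succ_sub_one (n : ℕ) (x : A) : x ∣ truncExp k (n + 1) x - 1 := by
  rw [truncExp, Finset.sum_range_succ']
  simpa using Finset.dvd_sum fun i _ => dvd_smul_of_dvd _ (dvd_pow_self x i.succ_ne_zero)

end Ring

section Derivation

variable {k A M : Type*} [Field k] [CommRing A] [Algebra k A] [AddCommGroup M] [Module k M]
  [Module A M] [IsScalarTower k A M]

lemma derivation_truncExp_succ (D : Derivation k A M) {m : ℕ} (hm : (m ! : k) ≠ 0) (x : A) :
    D (truncExp k (m + 1) x) = truncExp k m x • D x := by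
  have hterm : ∀ i ∈ Finset.range m,
      D (((i + 1)! : k)⁻¹ • x ^ (i + 1)) = ((i ! : k)⁻¹ • x ^ i) • D x := by
    intro i hi
    have hi0 := natCast_succ_ne_zero_of_factorial_ne_zero hm (Finset.mem_range.1 hi)
    rw [D.map_smul, D.leibniz_pow, Nat.add_sub_cancel, ← Nat.cast_smul_eq_nsmul k, smul_smul,
      Nat.factorial_succ, Nat.cast_mul, mul_inv_rev, inv_mul_cancel_right₀ hi0, smul_assoc]
  rw [truncExp, Finset.sum_range_succ', map_add, map_sum, Finset.sum_congr rfl hterm, truncExp,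
    Finset.sum_smul]
  simp

lemma smul_derivation_truncLog_succ (D : Derivation k A M) {m : ℕ} (hm : (m ! : k) ≠ 0) (u : A) :
    u • D (truncLog k (m + 1) u) = (1 - (1 - u) ^ m) • D u := by
  have hterm : ∀ i ∈ Finset.range m,
      D (((-1 : k) ^ i / (i + 1 : ℕ)) • (u - 1) ^ (i + 1)) = (1 - u) ^ i • D u := by
    intro i hi
    have hi0 := natCast_succ_ne_zero_of_factorial_ne_zero hm (Finset.mem_range.1 hi)
    have hsign : (-1 : k) ^ i • (u - 1) ^ i = (1 - u) ^ i := by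
      rw [← smul_pow, neg_one_smul, neg_sub]
    rw [D.map_smul, D.leibniz_pow, Nat.add_sub_cancel, ← Nat.cast_smul_eq_nsmul k, smul_smul,
      div_mul_cancel₀ _ hi0, map_sub, D.map_one_eq_zero, sub_zero, ← smul_assoc, hsign]
  have hgeom := mul_neg_geom_sum (1 - u) m
  rw [sub_sub_cancel] at hgeom
  rw [truncLog_succ_eq_sum_range, map_sum, Finset.sum_congr rfl hterm, ← Finset.sum_smul,
    smul_smul, hgeom]

/- Both error terms, `ℓ ^ m / m!` from the exponential and `(1 - u) ^ m` from the logarithm, are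
multiples of `(u - 1) ^ m`. -/
lemma sub_one_pow_dvd_mul_derivation_truncExp_truncLog_sub (D : Derivation k A A) {m : ℕ}
    (hm : (m ! : k) ≠ 0) (u : A) :
    (u - 1) ^ m ∣ u * D (truncExp k (m + 1) (truncLog k (m + 1) u)) -
      truncExp k (m + 1) (truncLog k (m + 1) u) * D u := by
  set ℓ := truncLog k (m + 1) u
  have hlog : u * D ℓ = (1 - (1 - u) ^ m) * D u := smul_derivation_truncLog_succ D hm u
  have herror : u * D (truncExp k (m + 1) ℓ) - truncExp k (m + 1) ℓ * D u =
      -(truncExp k m ℓ * D u * (1 - u) ^ m + D u * (m ! : k)⁻¹ • ℓ ^ m) := by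
    rw [derivation_truncExp_succ D hm, truncExp_succ, smul_eq_mul]
    linear_combination truncExp k m ℓ * hlog
  have hsub : (u - 1) ^ m ∣ (1 - u) ^ m := pow_dvd_pow_of_dvd (dvd_sub_comm.1 dvd_rfl) m
  have hpow : (u - 1) ^ m ∣ ℓ ^ m := pow_dvd_pow_of_dvd (sub_one_dvd_truncLog _ _) m
  rw [herror, dvd_neg]
  exact dvd_add (hsub.mul_left _) ((dvd_smul_of_dvd _ hpow).mul_left _)

end Derivation

section Polynomial

open Polynomial

lemma X_pow_succ_dvd_of_X_pow_dvd_derivative {R : Type*} [Semiring R] [NoZeroDivisors R] {m : ℕ}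
    (hm : (m ! : R) ≠ 0) {G : R[X]} (hG : X ∣ G) (hG' : X ^ m ∣ derivative G) :
    X ^ (m + 1) ∣ G := by
  rw [X_pow_dvd_iff] at hG' ⊢
  rintro (_ | i) hi
  · exact X_dvd_iff.1 hG
  · have hi : i < m := Nat.lt_of_succ_lt_succ hi
    have hcoeff : G.coeff (i + 1) * ((i + 1 : ℕ) : R) = 0 := by
      simpa [coeff_derivative] using hG' i hi
    exact (mul_eq_zero.1 hcoeff).resolve_right (natCast_succ_ne_zero_of_factorial_ne_zero hm hi)

lemma X_pow_succ_dvd_of_X_pow_dvd_mul_derivative_sub {R : Type*} [CommRing R] [IsDomain R]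
    {a b G : R[X]} (ha : ¬X ∣ a) (hG : X ∣ G) {m : ℕ} (hm : (m ! : R) ≠ 0)
    (hode : X ^ m ∣ a * derivative G - b * G) : X ^ (m + 1) ∣ G := by
  induction m with
  | zero => simpa using hG
  | succ m ih =>
    have hm' : (m ! : R) ≠ 0 := by
      rw [Nat.factorial_succ, Nat.cast_mul] at hm
      exact right_ne_zero_of_mul hm
    have hGm : X ^ (m + 1) ∣ G := ih hm' ((pow_dvd_pow X m.le_succ).trans hode)
    have haG' : X ^ (m + 1) ∣ a * derivative G := (dvd_sub_left (hGm.mul_left b)).1 hode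
    exact X_pow_succ_dvd_of_X_pow_dvd_derivative hm hG
      (prime_X.pow_dvd_of_dvd_mul_left _ ha haG')

variable {k : Type*} [Field k]

lemma X_dvd_truncLog_one_add_X (n : ℕ) : X ∣ truncLog k n (1 + X : k[X]) := by
  have h := sub_one_dvd_truncLog (k := k) n (1 + X : k[X])
  rwa [add_sub_cancel_left] at h

lemma X_dvd_truncExp_succ_truncLog_sub (m n : ℕ) :
    X ∣ truncExp k (m + 1) (truncLog k n (1 + X : k[X])) - (1 + X) := by
  rw [← sub_sub]
  exact dvd_sub ((X_dvd_truncLog_one_add_X n).trans (dvd_truncExp_succ_sub_one m _)) dvd_rfl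

lemma X_pow_dvd_one_add_X_mul_derivative_truncExp_truncLog_sub {m : ℕ} (hm : (m ! : k) ≠ 0) :
    X ^ m ∣ (1 + X) * derivative (truncExp k (m + 1) (truncLog k (m + 1) (1 + X : k[X]))) -
      truncExp k (m + 1) (truncLog k (m + 1) (1 + X : k[X])) := by
  have h := sub_one_pow_dvd_mul_derivation_truncExp_truncLog_sub derivative' hm (1 + X : k[X])
  rw [add_sub_cancel_left] at h
  simpa using h

lemma X_pow_dvd_truncExp_truncLog_sub {n : ℕ} (hn : ((n - 1)! : k) ≠ 0) :
    X ^ n ∣ truncExp k n (truncLog k n (1 + X : k[X])) - (1 + X) := by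
  obtain _ | m := n
  · simp
  have hconst := X_dvd_truncExp_succ_truncLog_sub (k := k) m (m + 1)
  have hode := X_pow_dvd_one_add_X_mul_derivative_truncExp_truncLog_sub hn
  set F := truncExp k (m + 1) (truncLog k (m + 1) (1 + X : k[X]))
  have hdiff : (1 + X) * derivative (F - (1 + X)) - 1 * (F - (1 + X)) =
      (1 + X) * derivative F - F := by
    simp only [derivative_sub, derivative_add, derivative_one, derivative_X]
    ring
  have hX_ndvd : ¬(X : k[X]) ∣ 1 + X := by simp [X_dvd_iff]
  exact X_pow_succ_dvd_of_X_pow_dvd_mul_derivative_sub hX_ndvd hconst hn (by rwa [hdiff])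

end Polynomial

theorem truncExp_truncLog_general {k A : Type*} [Field k] [Ring A] [Algebra k A] (n : ℕ)
    (hn : ((n - 1)! : k) ≠ 0) (u : A) (hu : (u - 1) ^ n = 0) :
    truncExp k n (truncLog k n u) = u := by
  obtain ⟨q, hq⟩ := X_pow_dvd_truncExp_truncLog_sub hn
  have heval := congrArg (Polynomial.aeval (u - 1)) hq
  simp only [map_sub, map_add, map_mul, map_pow, map_one, map_truncExp, map_truncLog,
    Polynomial.aeval_X, add_sub_cancel, hu, zero_mul] at heval
  exact sub_eq_zero.1 heval

/-- `E(L(u)) = u` for `p`-unipotent `u`. -/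
theorem truncExp_truncLog {k A : Type*} [Field k] [Ring A] [Algebra k A]
    (p : ℕ) [Fact p.Prime] [CharP k p] (u : A) (hu : (u - 1) ^ p = 0) :
    truncExp k p (truncLog k p u) = u := by
  have hp : p - 1 < p := Nat.sub_one_lt (NeZero.ne p)
  exact truncExp_truncLog_general p ((IsUnit.natCast_factorial_iff_of_charP p).2 hp).ne_zero u hu
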